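/- Let M be a 4+1d bispinor-encoded bivector M^{μν} = (1/4)γ^{μν}_{ab}M^aM^b for some spinor M^a ∈ ℂ⁴. Then M^{μν} is totally null in the sense M^{μν}M_{νρ} = 0 (as a matrix product with indices contracted via η = diag(-1,1,1,1,1)). -/

import Mathlib

/-!
The gamma matrices are explicit, so the ten independent components of `Mbiv M` are explicit
quadratic forms in the four components of the spinor (`Mbiv_eq`). Each entry of the contracted
product is then a quartic polynomial in these components, and it vanishes identically once
`I ^ 2 = -1` is used; for example the `(0, 0)` entry is a multiple of
`(a + b) ^ 2 - (a - b) ^ 2 - 4 * (p * q - r * s) ^ 2 + 4 * (p * s - q * r) ^ 2` with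
`a = p ^ 2 - r ^ 2` and `b = q ^ 2 - s ^ 2`, which is zero because both `a * b` and
`(p * q - r * s) ^ 2 - (p * s - q * r) ^ 2` expand to
`p ^ 2 * q ^ 2 - p ^ 2 * s ^ 2 - q ^ 2 * r ^ 2 + r ^ 2 * s ^ 2`.
-/

open Matrix Complex

noncomputable section

/-- Pauli matrices -/
def σ1 : Matrix (Fin 2) (Fin 2) ℂ := !![0, 1; 1, 0]
def σ2 : Matrix (Fin 2) (Fin 2) ℂ := !![0, -I; I, 0]
def σ3 : Matrix (Fin 2) (Fin 2) ℂ := !![1, 0; 0, -1]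

/-- The explicit 4+1d gamma matrices in 2×2 block form:
γ⁰ = ((0,1),(1,0)), γᵏ = -i((σᵏ,0),(0,-σᵏ)), γ⁴ = ((0,-1),(1,0)). -/
def γ : Fin 5 → Matrix (Fin 4) (Fin 4) ℂ :=
  ![!![0,0,1,0; 0,0,0,1; 1,0,0,0; 0,1,0,0],
    !![0,-I,0,0; -I,0,0,0; 0,0,0,I; 0,0,I,0],
    !![0,-1,0,0; 1,0,0,0; 0,0,0,1; 0,0,-1,0],
    !![-I,0,0,0; 0,I,0,0; 0,0,I,0; 0,0,0,-I],
    !![0,0,-1,0; 0,0,0,-1; 1,0,0,0; 0,1,0,0]]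

/-- mostly-plus Minkowski metric diag(-1,1,1,1,1), complex-valued -/
def η : Fin 5 → ℂ := fun μ => if μ = 0 then -1 else 1

/-- mostly-plus Minkowski metric diag(-1,1,1,1,1), real-valued -/
def ηℝ : Fin 5 → ℝ := fun μ => if μ = 0 then -1 else 1

/-- symplectic spinor metric I_{ab} = -i((0,σ₂),(σ₂,0)) -/
def Imat : Matrix (Fin 4) (Fin 4) ℂ := !![0,0,0,-1; 0,0,1,0; 0,-1,0,0; 1,0,0,0]

/-- inverse spinor metric I^{ab}, characterized by I^{ac} I_{bc} = δ^a_b,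
i.e. Iup * Imatᵀ = 1, i.e. Iup = (Imatᵀ)⁻¹ -/
def Iup : Matrix (Fin 4) (Fin 4) ℂ := (Imat.transpose)⁻¹

/-- lowered-index gamma matrices γ^μ_{ab} = I_{ac}(γ^μ)^c{}_b -/
def glow (μ : Fin 5) : Matrix (Fin 4) (Fin 4) ℂ := Imat * γ μ

/-- raised-index gamma matrices γ^{μ ab} = I^{ca} I^{db} γ^μ_{cd} -/
def gup (μ : Fin 5) : Matrix (Fin 4) (Fin 4) ℂ :=
  fun a b => ∑ c, ∑ d, Iup c a * Iup d b * glow μ c d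

/-- γ^{μν}_{ab} = I_{ac}(γ^{[μ}γ^{ν]})^c{}_b with γ^{[μ}γ^{ν]} = (1/2)(γ^μγ^ν - γ^νγ^μ) -/
def gmnLow (μ ν : Fin 5) : Matrix (Fin 4) (Fin 4) ℂ :=
  Imat * ((1/2 : ℂ) • (γ μ * γ ν - γ ν * γ μ))

/-- γ^{μν ab} with both spinor indices raised -/
def gmnUp (μ ν : Fin 5) : Matrix (Fin 4) (Fin 4) ℂ :=
  fun a b => ∑ c, ∑ d, Iup c a * Iup d b * gmnLow μ ν c d

/-- contraction x^μ γ_μ of a (complex) vector with the gamma matrices -/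
def slash (x : Fin 5 → ℂ) : Matrix (Fin 4) (Fin 4) ℂ := ∑ μ, x μ • γ μ

/-- left-handed chiral projector P_L(x) = (1/2)(Id - i x^μ γ_μ) -/
def PL (x : Fin 5 → ℂ) : Matrix (Fin 4) (Fin 4) ℂ := (1/2 : ℂ) • (1 - I • slash x)

/-- right-handed chiral projector P_R(x) = (1/2)(Id + i x^μ γ_μ) -/
def PR (x : Fin 5 → ℂ) : Matrix (Fin 4) (Fin 4) ℂ := (1/2 : ℂ) • (1 + I • slash x)

/-- complexification of a real 5-vector -/
def cV (x : Fin 5 → ℝ) : Fin 5 → ℂ := fun μ => (x μ : ℂ)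

/-- the bivector M^{μν} = (1/4) γ^{μν}_{ab} M^a M^b -/
def Mbiv (M : Fin 4 → ℂ) : Fin 5 → Fin 5 → ℂ :=
  fun μ ν => (1/4 : ℂ) * ∑ a, ∑ b, gmnLow μ ν a b * M a * M b

/-- The matrix of components of the bivector encoded by the spinor `(p, q, r, s)`. -/
def bivectorMatrix (p q r s : ℂ) : Matrix (Fin 5) (Fin 5) ℂ :=
  (1 / 4 : ℂ) •
    !![0, I * (p ^ 2 - q ^ 2 - r ^ 2 + s ^ 2), -p ^ 2 - q ^ 2 + r ^ 2 + s ^ 2,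
         -2 * I * (p * q - r * s), 2 * (p * s - q * r);
       -I * (p ^ 2 - q ^ 2 - r ^ 2 + s ^ 2), 0, -2 * I * (p * s + q * r),
         2 * (p * r + q * s), -I * (p ^ 2 - q ^ 2 + r ^ 2 - s ^ 2);
       p ^ 2 + q ^ 2 - r ^ 2 - s ^ 2, 2 * I * (p * s + q * r), 0,
         2 * I * (p * r - q * s), p ^ 2 + q ^ 2 + r ^ 2 + s ^ 2;
       2 * I * (p * q - r * s), -2 * (p * r + q * s), -2 * I * (p * r - q * s), 0,
         2 * I * (p * q + r * s);
       -2 * (p * s - q * r), I * (p ^ 2 - q ^ 2 + r ^ 2 - s ^ 2),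
         -p ^ 2 - q ^ 2 - r ^ 2 - s ^ 2, -2 * I * (p * q + r * s), 0]

theorem Mbiv_eq (M : Fin 4 → ℂ) (μ ν : Fin 5) :
    Mbiv M μ ν = bivectorMatrix (M 0) (M 1) (M 2) (M 3) μ ν := by
  generalize hp : M 0 = p
  generalize hq : M 1 = q
  generalize hr : M 2 = r
  generalize hs : M 3 = s
  fin_cases μ <;> fin_cases ν <;>
    simp [Mbiv, gmnLow, γ, Imat, Fin.sum_univ_four, bivectorMatrix, hp, hq, hr, hs] <;>
    ring_nf

/-- a bivector of the form M^{μν} = (1/4)γ^{μν}_{ab}M^aM^b is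
totally null: M^{μν} M_{νρ} = 0 (indices contracted with η). -/
theorem spinor_bivector_null (M : Fin 4 → ℂ) :
    ∀ μ ρ : Fin 5, (∑ ν, Mbiv M μ ν * (η ν * η ρ * Mbiv M ν ρ)) = 0 := by
  intro μ ρ
  simp only [Mbiv_eq]
  generalize M 0 = p
  generalize M 1 = q
  generalize M 2 = r
  generalize M 3 = s
  fin_cases μ <;> fin_cases ρ <;>
    simp [Fin.sum_univ_five, bivectorMatrix, η] <;>
    ring_nf <;> try (simp only [I_sq]; ring_nf)
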